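/- arXiv:2312.03778 — 3 statements merged into one kernel-verified Lean document; each statement's English description precedes it below -/
import Mathlib

section
/- Let H be an n×n complex matrix that is a contraction (H*H ≤ I), let B be an n×n Hermitian matrix, and let X be an n×n positive definite matrix with Tr(X) = 1. Then S_H(X | exp(B)) equals the supremum, over all n×n Hermitian matrices A, of Tr(X A) − log Tr(exp(A + H B H*)) − 1 + Tr(exp(B)), and this supremum is attained (at A₀ = log X − H B H*). -/
open Matrix ComplexOrder

/-- Matrix logarithm of a (positive definite) Hermitian matrix, via functional calculus. -/
noncomputable def mlog {n : ℕ} (A : Matrix (Fin n) (Fin n) ℂ) : Matrix (Fin n) (Fin n) ℂ :=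
  cfc Real.log A

/-- Matrix exponential of a Hermitian matrix, via functional calculus. -/
noncomputable def mexp {n : ℕ} (A : Matrix (Fin n) (Fin n) ℂ) : Matrix (Fin n) (Fin n) ℂ :=
  cfc Real.exp A

/-- Real power of a (positive definite) Hermitian matrix, via functional calculus. -/
noncomputable def mpow {n : ℕ} (A : Matrix (Fin n) (Fin n) ℂ) (p : ℝ) : Matrix (Fin n) (Fin n) ℂ :=
  cfc (fun x : ℝ => x ^ p) A

/-- Deformed logarithm `log_q x = (x^(q-1) - 1)/(q-1)`. -/
noncomputable def logq (q x : ℝ) : ℝ := (x ^ (q - 1) - 1) / (q - 1)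

/-- Deformed exponential `exp_q x = (1 + (q-1)x)^(1/(q-1))`, with `exp_1 = exp`. -/
noncomputable def expq (q x : ℝ) : ℝ :=
  if q = 1 then Real.exp x else (1 + (q - 1) * x) ^ (1 / (q - 1))

/-- Deformed logarithm of a positive definite matrix, via functional calculus. -/
noncomputable def mlogq {n : ℕ} (q : ℝ) (A : Matrix (Fin n) (Fin n) ℂ) :
    Matrix (Fin n) (Fin n) ℂ :=
  cfc (logq q) A

/-- Deformed exponential of a Hermitian matrix, via functional calculus. -/
noncomputable def mexpq {m : ℕ} (q : ℝ) (A : Matrix (Fin m) (Fin m) ℂ) :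
    Matrix (Fin m) (Fin m) ℂ :=
  cfc (expq q) A

/-- Real part of the trace. -/
noncomputable def trRe {n : ℕ} (M : Matrix (Fin n) (Fin n) ℂ) : ℝ := (Matrix.trace M).re

/-- The reduced relative entropy `S_H(A | B) = Tr[A log A - H* A H log B - A + B]`. -/
noncomputable def SH {n : ℕ} (H A B : Matrix (Fin n) (Fin n) ℂ) : ℝ :=
  trRe (A * mlog A - Hᴴ * A * H * mlog B - A + B)

/-- The reduced Tsallis relative entropy
`S_{H,q}(A | B) = Tr[A^(2-q) log_q A - H* A^(2-q) H log_q B - A + B]`. -/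
noncomputable def STq {n : ℕ} (H : Matrix (Fin n) (Fin n) ℂ) (q : ℝ)
    (A B : Matrix (Fin n) (Fin n) ℂ) : ℝ :=
  trRe (mpow A (2 - q) * mlogq q A - Hᴴ * mpow A (2 - q) * H * mlogq q B - A + B)


/-- The trace of a product of functions of two Hermitian matrices is a nonnegative combination of
products of values at their eigenvalues, with weights independent of the functions. -/
lemma Matrix.IsHermitian.exists_trRe_cfc_mul_cfc {n : ℕ} {A B : Matrix (Fin n) (Fin n) ℂ}
    (hA : A.IsHermitian) (hB : B.IsHermitian) :
    ∃ w : Fin n → Fin n → ℝ, (∀ i j, 0 ≤ w i j) ∧ ∀ f g : ℝ → ℝ,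
      trRe (cfc f A * cfc g B) =
        ∑ i, ∑ j, w i j * (f (hA.eigenvalues i) * g (hB.eigenvalues j)) := by
  set U : Matrix (Fin n) (Fin n) ℂ := hA.eigenvectorUnitary.1
  set V : Matrix (Fin n) (Fin n) ℂ := hB.eigenvectorUnitary.1
  refine ⟨fun i j => Complex.normSq ((star U * V) i j), fun i j => Complex.normSq_nonneg _,
    fun f g => ?_⟩
  set D : Matrix (Fin n) (Fin n) ℂ := diagonal (RCLike.ofReal ∘ f ∘ hA.eigenvalues)
  set E : Matrix (Fin n) (Fin n) ℂ := diagonal (RCLike.ofReal ∘ g ∘ hB.eigenvalues)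
  have key : trace (cfc f A * cfc g B) = trace (D * (star U * V) * E * star (star U * V)) := by
    rw [hA.cfc_eq, hB.cfc_eq, IsHermitian.cfc, IsHermitian.cfc, Unitary.conjStarAlgAut_apply,
      Unitary.conjStarAlgAut_apply]
    change trace (U * D * star U * (V * E * star V)) = _
    rw [star_mul, star_star, show U * D * star U * (V * E * star V)
      = U * (D * star U * V * E * star V) by simp only [Matrix.mul_assoc], trace_mul_comm]
    simp only [Matrix.mul_assoc]
  rw [trRe, key, trace, Complex.re_sum]
  refine Finset.sum_congr rfl fun i _ => ?_
  rw [diag_apply, Matrix.mul_apply, Complex.re_sum]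
  refine Finset.sum_congr rfl fun j _ => ?_
  rw [mul_diagonal, diagonal_mul, star_eq_conjTranspose (star U * V), conjTranspose_apply]
  simp [Complex.normSq_apply]
  ring

lemma Matrix.IsHermitian.trRe_cfc {n : ℕ} {A : Matrix (Fin n) (Fin n) ℂ} (hA : A.IsHermitian)
    (f : ℝ → ℝ) : trRe (cfc f A) = ∑ i, f (hA.eigenvalues i) := by
  rw [trRe, hA.cfc_eq, IsHermitian.cfc, Unitary.conjStarAlgAut_apply, trace_mul_comm,
    ← Matrix.mul_assoc, Unitary.coe_star_mul_self, Matrix.one_mul, trace_diagonal]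
  simp

lemma Matrix.PosDef.pos_of_mem_spectrum {n : ℕ} {X : Matrix (Fin n) (Fin n) ℂ} (hX : X.PosDef)
    {x : ℝ} (hx : x ∈ spectrum ℝ X) : 0 < x := by
  obtain ⟨i, rfl⟩ := hX.1.spectrum_real_eq_range_eigenvalues ▸ hx
  exact hX.eigenvalues_pos i

lemma mexp_mlog {n : ℕ} {X : Matrix (Fin n) (Fin n) ℂ} (hX : X.PosDef) : mexp (mlog X) = X := by
  have hXs : IsSelfAdjoint X := hX.1
  have hlog : ContinuousOn Real.log (spectrum ℝ X) :=
    Real.continuousOn_log.mono fun x hx => (hX.pos_of_mem_spectrum hx).ne'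
  rw [mexp, mlog, ← cfc_comp' Real.exp Real.log X]
  conv_rhs => rw [← cfc_id ℝ X]
  exact cfc_congr fun x hx => Real.exp_log (hX.pos_of_mem_spectrum hx)

lemma mlog_mexp {n : ℕ} {B : Matrix (Fin n) (Fin n) ℂ} (hB : B.IsHermitian) :
    mlog (mexp B) = B := by
  have hBs : IsSelfAdjoint B := hB
  have hlog : ContinuousOn Real.log (Real.exp '' spectrum ℝ B) :=
    Real.continuousOn_log.mono (by rintro _ ⟨x, -, rfl⟩; exact (Real.exp_pos x).ne')
  rw [mlog, mexp, ← cfc_comp' Real.log Real.exp B]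
  simp only [Real.log_exp]
  exact cfc_id' ℝ B

lemma Real.mul_le_mul_log_sub_add_exp {p : ℝ} (hp : 0 < p) (y : ℝ) :
    p * y ≤ p * Real.log p - p + Real.exp y := by
  have h := mul_le_mul_of_nonneg_left (Real.add_one_le_exp (y - Real.log p)) hp.le
  rw [Real.exp_sub, Real.exp_log hp, mul_div_cancel₀ _ hp.ne'] at h
  linarith

/-- The Gibbs variational inequality: the log-partition function dominates
`Tr (X C) - Tr (X log X)` for every density matrix `X`. -/
lemma trRe_mul_sub_log_trRe_mexp_le {n : ℕ} {X C : Matrix (Fin n) (Fin n) ℂ} (hX : X.PosDef)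
    (hTr : trace X = 1) (hC : C.IsHermitian) :
    trRe (X * C) - Real.log (trRe (mexp C)) ≤ trRe (X * mlog X) := by
  have hXs : IsSelfAdjoint X := hX.1
  have hCs : IsSelfAdjoint C := hC
  have hn : Nonempty (Fin n) := by
    by_contra h
    rw [not_nonempty_iff] at h
    simp [trace] at hTr
  have hT : 0 < trRe (mexp C) := by
    rw [mexp, hC.trRe_cfc]
    exact Finset.sum_pos (fun i _ => Real.exp_pos _) Finset.univ_nonempty
  set T := trRe (mexp C) with hTdef
  have hlog : ContinuousOn Real.log (spectrum ℝ X) :=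
    Real.continuousOn_log.mono fun x hx => (hX.pos_of_mem_spectrum hx).ne'
  have hX1 : cfc (fun x : ℝ => x) X = X := cfc_id' ℝ X
  have hC1 : cfc (fun x : ℝ => x) C = C := cfc_id' ℝ C
  have hXo : cfc (fun _ : ℝ => (1 : ℝ)) X = 1 := cfc_const_one ℝ X
  have hCo : cfc (fun _ : ℝ => (1 : ℝ)) C = 1 := cfc_const_one ℝ C
  have hXl : cfc (fun x : ℝ => x * Real.log x) X = X * mlog X := by
    rw [cfc_mul (fun x : ℝ => x) Real.log X, hX1, mlog]
  have hX_one : trRe X = 1 := by simp [trRe, hTr]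
  obtain ⟨w, hw, h⟩ := hX.1.exists_trRe_cfc_mul_cfc hC
  have hXC := h (fun x => x) (fun x => x)
  have hXX := h (fun x => x) (fun _ => 1)
  have hXlog := h (fun x => x * Real.log x) (fun _ => 1)
  have hexp := h (fun _ => 1) Real.exp
  rw [hX1, hC1] at hXC
  rw [hX1, hCo, Matrix.mul_one] at hXX
  rw [hXl, hCo, Matrix.mul_one] at hXlog
  rw [hXo, Matrix.one_mul, ← mexp, ← hTdef] at hexp
  have hsum := Finset.sum_le_sum fun i (_ : i ∈ Finset.univ) =>
    Finset.sum_le_sum fun j (_ : j ∈ Finset.univ) =>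
      mul_le_mul_of_nonneg_left (Real.mul_le_mul_log_sub_add_exp (hX.eigenvalues_pos i)
        (hC.eigenvalues j - Real.log T)) (hw i j)
  have hl : ∑ i, ∑ j, w i j * (hX.1.eigenvalues i * (hC.eigenvalues j - Real.log T))
      = trRe (X * C) - Real.log T * trRe X := by
    rw [hXC, hXX]
    simp only [Finset.mul_sum, ← Finset.sum_sub_distrib]
    exact Finset.sum_congr rfl fun i _ => Finset.sum_congr rfl fun j _ => by ring
  have hr : ∑ i, ∑ j, w i j * (hX.1.eigenvalues i * Real.log (hX.1.eigenvalues i)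
      - hX.1.eigenvalues i + Real.exp (hC.eigenvalues j - Real.log T))
      = trRe (X * mlog X) - trRe X + T⁻¹ * T := by
    have hshift (c : ℝ) : Real.exp (c - Real.log T) = T⁻¹ * Real.exp c := by
      rw [Real.exp_sub, Real.exp_log hT, div_eq_inv_mul]
    have hTsum : T⁻¹ * T = ∑ i, ∑ j, w i j * (1 * (T⁻¹ * Real.exp (hC.eigenvalues j))) := by
      nth_rw 2 [hexp]
      simp only [Finset.mul_sum]
      exact Finset.sum_congr rfl fun i _ => Finset.sum_congr rfl fun j _ => by ring
    rw [hTsum, hXlog, hXX]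
    simp only [← Finset.sum_sub_distrib, ← Finset.sum_add_distrib, hshift]
    exact Finset.sum_congr rfl fun i _ => Finset.sum_congr rfl fun j _ => by ring
  rw [hl, hr, hX_one, inv_mul_cancel₀ hT.ne'] at hsum
  linarith

/-- Variational expression: for a contraction H, Hermitian B and positive definite X
with Tr X = 1, S_H(X | exp B) is the attained supremum of
Tr(X A) - log Tr exp(A + H B H*) - 1 + Tr exp(B) over Hermitian A. -/
theorem stmt1 {n : ℕ} (H B X : Matrix (Fin n) (Fin n) ℂ)
    (hH : (1 - Hᴴ * H).PosSemidef) (hB : B.IsHermitian) (hX : X.PosDef)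
    (hTr : Matrix.trace X = 1) :
    IsGreatest
      {r : ℝ | ∃ A : Matrix (Fin n) (Fin n) ℂ, A.IsHermitian ∧
        r = trRe (X * A) - Real.log (trRe (mexp (A + H * B * Hᴴ))) - 1 + trRe (mexp B)}
      (SH H X (mexp B)) := by
  have hHBH : (H * B * Hᴴ).IsHermitian := isHermitian_mul_mul_conjTranspose H hB
  have hXr : trRe X = 1 := by simp [trRe, hTr]
  have hcyc : trRe (Hᴴ * X * H * B) = trRe (X * (H * B * Hᴴ)) := by
    rw [trRe, trRe, show Hᴴ * X * H * B = Hᴴ * (X * H * B) by simp only [Matrix.mul_assoc],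
      trace_mul_comm]
    simp only [Matrix.mul_assoc]
  have hSH : SH H X (mexp B)
      = trRe (X * mlog X) - trRe (X * (H * B * Hᴴ)) - 1 + trRe (mexp B) := by
    rw [SH, mlog_mexp hB, ← hcyc, ← hXr]
    simp [trRe]
  rw [hSH]
  constructor
  · have hlogX : (mlog X).IsHermitian := cfc_predicate Real.log X
    refine ⟨mlog X - H * B * Hᴴ, hlogX.sub hHBH, ?_⟩
    rw [sub_add_cancel, mexp_mlog hX, hXr, Real.log_one, Matrix.mul_sub]
    simp [trRe]
  · rintro _ ⟨A, hA, rfl⟩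
    have h := trRe_mul_sub_log_trRe_mexp_le hX hTr (hA.add hHBH)
    have hadd : trRe (X * (A + H * B * Hᴴ)) = trRe (X * A) + trRe (X * (H * B * Hᴴ)) := by
      simp [trRe, Matrix.mul_add]
    linarith
end

section
/- Let B be an n×n Hermitian matrix and let H be an n×n contraction (H*H ≤ I, equivalently HH* ≤ I). Then Tr(exp(H B H*)) ≤ Tr(H exp(B) H*) + Tr(I − H H*), where exp denotes the matrix exponential. -/
open Matrix ComplexOrder

/-- The Jensen inequality with weights of total mass at most one, the missing mass sitting at `0`. -/
theorem ConvexOn.map_sum_le_add_one_sub {ι : Type*} [Fintype ι] {f : ℝ → ℝ} (hf : ConvexOn ℝ Set.univ f)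
    {w b : ι → ℝ} (hw : ∀ j, 0 ≤ w j) (hw_sum : ∑ j, w j ≤ 1) :
    f (∑ j, w j * b j) ≤ ∑ j, w j * f (b j) + (1 - ∑ j, w j) * f 0 := by
  have := hf.map_sum_le (t := Finset.univ) (w := fun o : Option ι => o.elim (1 - ∑ j, w j) w)
    (p := fun o => o.elim 0 b)
    (by rintro (_ | j) _ <;> simp [hw, hw_sum]) (by simp [Fintype.sum_option]) (by simp)
  simpa [Fintype.sum_option, add_comm] using this

namespace Matrix

variable {ι : Type*} [Fintype ι] [DecidableEq ι]

/-- If `Hᴴ * H ≤ 1` then `H * Hᴴ ≤ 1`. -/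
theorem PosSemidef.one_sub_mul_conjTranspose {H : Matrix ι ι ℂ} (hH : (1 - Hᴴ * H).PosSemidef) :
    (1 - H * Hᴴ).PosSemidef := by
  have key : 1 - H * Hᴴ = (1 - H * Hᴴ) * (1 - H * Hᴴ)ᴴ + H * (1 - Hᴴ * H) * Hᴴ := by
    simp only [conjTranspose_sub, conjTranspose_one, conjTranspose_mul, conjTranspose_conjTranspose]
    noncomm_ring
  rw [key]
  exact (posSemidef_self_mul_conjTranspose _).add (hH.mul_mul_conjTranspose_same H)

/-- A Hermitian matrix together with its functional calculus is diagonalized by a unitary. -/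
theorem IsHermitian.exists_unitary_cfc_eq {A : Matrix ι ι ℂ} (hA : A.IsHermitian) :
    ∃ (V : Matrix ι ι ℂ) (a : ι → ℝ), Vᴴ * V = 1 ∧ V * Vᴴ = 1 ∧
      A = V * diagonal (fun i => (a i : ℂ)) * Vᴴ ∧
      ∀ f : ℝ → ℝ, cfc f A = V * diagonal (fun i => (f (a i) : ℂ)) * Vᴴ := by
  refine ⟨hA.eigenvectorUnitary, hA.eigenvalues, Unitary.coe_star_mul_self _,
    Unitary.coe_mul_star_self _, ?_, fun f => ?_⟩
  · exact hA.spectral_theorem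
  · rw [hA.cfc_eq]
    rfl

/-- The diagonal of `W * diagonal b * Wᴴ` for real `b`. -/
theorem mul_diagonal_mul_conjTranspose_apply_self (W : Matrix ι ι ℂ) (b : ι → ℝ) (i : ι) :
    (W * diagonal (fun j => (b j : ℂ)) * Wᴴ) i i =
      ((∑ j, Complex.normSq (W i j) * b j : ℝ) : ℂ) := by
  rw [mul_apply]
  simp only [mul_diagonal, conjTranspose_apply, RCLike.star_def, Complex.ofReal_sum,
    Complex.ofReal_mul, ← Complex.mul_conj]
  exact Finset.sum_congr rfl fun j _ => by ring

/-- The trace is invariant under conjugation by a unitary. -/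
theorem trace_conjTranspose_mul_mul_of_unitary {V : Matrix ι ι ℂ} (hV : V * Vᴴ = 1)
    (M : Matrix ι ι ℂ) : (Vᴴ * M * V).trace = M.trace := by
  rw [trace_mul_cycle, hV, one_mul]

/-- Trace Jensen inequality for a contraction and a convex function. -/
theorem IsHermitian.re_trace_cfc_conj_le {f : ℝ → ℝ} (hf : ConvexOn ℝ Set.univ f)
    {B H : Matrix ι ι ℂ} (hB : B.IsHermitian) (hH : (1 - Hᴴ * H).PosSemidef) :
    (cfc f (H * B * Hᴴ)).trace.re ≤
      (H * cfc f B * Hᴴ).trace.re + (1 - H * Hᴴ).trace.re * f 0 := by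
  obtain ⟨U, b, -, hU, hBU, hfB⟩ := hB.exists_unitary_cfc_eq
  obtain ⟨V, a, hV', hV, hAV, hfA⟩ := (isHermitian_mul_mul_conjTranspose H hB).exists_unitary_cfc_eq
  set W := Vᴴ * H * U with hW
  have conj_eq (D : Matrix ι ι ℂ) : Vᴴ * (H * (U * D * Uᴴ) * Hᴴ) * V = W * D * Wᴴ := by
    simp only [hW, conjTranspose_mul, conjTranspose_conjTranspose, mul_assoc]
  have conj_diag (D : Matrix ι ι ℂ) : Vᴴ * (V * D * Vᴴ) * V = D := by
    simp only [mul_assoc, hV', mul_one]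
    rw [← mul_assoc, hV', one_mul]
  have ha (i : ι) : a i = ∑ j, Complex.normSq (W i j) * b j := by
    have h : diagonal (fun i => (a i : ℂ)) = W * diagonal (fun j => (b j : ℂ)) * Wᴴ := by
      rw [← conj_eq, ← hBU, hAV, conj_diag]
    have h' := congrFun₂ h i i
    rw [mul_diagonal_mul_conjTranspose_apply_self, diagonal_apply_eq] at h'
    exact_mod_cast h'
  have hdefect (i : ι) :
      (Vᴴ * (1 - H * Hᴴ) * V) i i = ((1 - ∑ j, Complex.normSq (W i j) : ℝ) : ℂ) := by
    have h : Vᴴ * (1 - H * Hᴴ) * V = 1 - W * diagonal (fun _ => ((1 : ℝ) : ℂ)) * Wᴴ := by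
      rw [← conj_eq]
      simp [mul_sub, sub_mul, hU, hV']
    rw [h, sub_apply, mul_diagonal_mul_conjTranspose_apply_self]
    simp
  have hsum (i : ι) : ∑ j, Complex.normSq (W i j) ≤ 1 := by
    have h := (hH.one_sub_mul_conjTranspose.conjTranspose_mul_mul_same V).diag_nonneg (i := i)
    rw [hdefect] at h
    exact sub_nonneg.mp (by exact_mod_cast h)
  have htrace_cfc : (cfc f (H * B * Hᴴ)).trace.re = ∑ i, f (a i) := by
    rw [← trace_conjTranspose_mul_mul_of_unitary hV, hfA, conj_diag]
    simp [trace_diagonal]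
  have htrace_conj :
      (H * cfc f B * Hᴴ).trace.re = ∑ i, ∑ j, Complex.normSq (W i j) * f (b j) := by
    rw [← trace_conjTranspose_mul_mul_of_unitary hV, hfB, conj_eq]
    simp only [trace, diag_apply, mul_diagonal_mul_conjTranspose_apply_self, Complex.re_sum,
      Complex.ofReal_re]
  have htrace_defect :
      (1 - H * Hᴴ).trace.re = ∑ i, (1 - ∑ j, Complex.normSq (W i j)) := by
    rw [← trace_conjTranspose_mul_mul_of_unitary hV]
    simp only [trace, diag_apply, hdefect, Complex.re_sum, Complex.ofReal_re]
  rw [htrace_cfc, htrace_conj, htrace_defect, Finset.sum_mul, ← Finset.sum_add_distrib]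
  refine Finset.sum_le_sum fun i _ => ?_
  rw [ha i]
  exact hf.map_sum_le_add_one_sub (fun j => Complex.normSq_nonneg _) (hsum i)

end Matrix

/-- Tr exp(H B H*) ≤ Tr(H exp(B) H*) + Tr(I - H H*) for Hermitian B and a contraction H. -/
theorem stmt2 {n : ℕ} (B H : Matrix (Fin n) (Fin n) ℂ)
    (hB : B.IsHermitian) (hH : (1 - Hᴴ * H).PosSemidef) :
    trRe (mexp (H * B * Hᴴ)) ≤ trRe (H * mexp B * Hᴴ) + trRe (1 - H * Hᴴ) := by
  simpa [trRe, mexp] using hB.re_trace_cfc_conj_le convexOn_exp hH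
end

section
/- Let H be an n×n contraction (H*H ≤ I) and let q ∈ [0,1) ∪ (1,2]. Then the map (A, B) ↦ S_{H,q}(A | B) is jointly convex on pairs of n×n positive definite matrices: for positive definite A₁, A₂, B₁, B₂ and t ∈ [0,1], S_{H,q}(tA₁ + (1−t)A₂ | tB₁ + (1−t)B₂) ≤ t·S_{H,q}(A₁ | B₁) + (1−t)·S_{H,q}(A₂ | B₂). -/
open Matrix ComplexOrder

/-- The entries of `K` in the eigenbases of `A` (on the left) and `B` (on the right). -/
noncomputable def eigenCoord {n : ℕ} {A B : Matrix (Fin n) (Fin n) ℂ} (hA : A.IsHermitian)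
    (hB : B.IsHermitian) (K : Matrix (Fin n) (Fin n) ℂ) : Matrix (Fin n) (Fin n) ℂ :=
  (hA.eigenvectorUnitary : Matrix (Fin n) (Fin n) ℂ)ᴴ * K *
    (hB.eigenvectorUnitary : Matrix (Fin n) (Fin n) ℂ)

lemma eigenCoord_surjective {n : ℕ} {A B : Matrix (Fin n) (Fin n) ℂ} (hA : A.IsHermitian)
    (hB : B.IsHermitian) : Function.Surjective (eigenCoord hA hB) := by
  intro M
  have hU := Unitary.coe_star_mul_self hA.eigenvectorUnitary
  have hV := Unitary.coe_star_mul_self hB.eigenvectorUnitary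
  rw [star_eq_conjTranspose] at hU hV
  refine ⟨(hA.eigenvectorUnitary : Matrix (Fin n) (Fin n) ℂ) * M *
    (hB.eigenvectorUnitary : Matrix (Fin n) (Fin n) ℂ)ᴴ, ?_⟩
  rw [eigenCoord, ← mul_assoc, ← mul_assoc, hU, one_mul, mul_assoc, hV, mul_one]

/-- The quadratic form `∑ f(aᵢ, bⱼ) |kᵢⱼ|²`, where `aᵢ`, `bⱼ` are the eigenvalues of `A`, `B` and
`kᵢⱼ` are the entries of `K` in the corresponding eigenbases. -/
noncomputable def spectralForm {n : ℕ} (f : ℝ → ℝ → ℝ) {A B : Matrix (Fin n) (Fin n) ℂ}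
    (hA : A.IsHermitian) (hB : B.IsHermitian) (K : Matrix (Fin n) (Fin n) ℂ) : ℝ :=
  ∑ i, ∑ j, f (hA.eigenvalues i) (hB.eigenvalues j) * Complex.normSq (eigenCoord hA hB K i j)

lemma trRe_conjTranspose_mul_cfc_mul_cfc {n : ℕ} {A B : Matrix (Fin n) (Fin n) ℂ}
    (hA : A.IsHermitian) (hB : B.IsHermitian) (φ ψ : ℝ → ℝ) (X K : Matrix (Fin n) (Fin n) ℂ) :
    trRe (Xᴴ * cfc φ A * K * cfc ψ B) =
      ∑ i, ∑ j, φ (hA.eigenvalues i) * ψ (hB.eigenvalues j) *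
        (star (eigenCoord hA hB X i j) * eigenCoord hA hB K i j).re := by
  have key : (Xᴴ * cfc φ A * K * cfc ψ B).trace = ((eigenCoord hA hB X)ᴴ *
      diagonal (fun i => ((φ (hA.eigenvalues i) : ℝ) : ℂ)) * eigenCoord hA hB K *
      diagonal (fun j => ((ψ (hB.eigenvalues j) : ℝ) : ℂ))).trace := by
    rw [hA.cfc_eq, hB.cfc_eq, IsHermitian.cfc, IsHermitian.cfc, Unitary.conjStarAlgAut_apply,
      Unitary.conjStarAlgAut_apply, ← mul_assoc, trace_mul_comm]
    simp only [eigenCoord, conjTranspose_mul, conjTranspose_conjTranspose, mul_assoc,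
      star_eq_conjTranspose]
    rfl
  rw [trRe, key, trace, Complex.re_sum, Finset.sum_comm]
  refine Finset.sum_congr rfl fun j _ => ?_
  rw [diag_apply, mul_diagonal, mul_apply, Finset.sum_mul, Complex.re_sum]
  refine Finset.sum_congr rfl fun i _ => ?_
  rw [mul_diagonal, conjTranspose_apply]
  simp only [Complex.mul_re, Complex.mul_im, Complex.ofReal_re, Complex.ofReal_im]
  ring

lemma trRe_conjTranspose_mul_cfc_mul_cfc_self {n : ℕ} {A B : Matrix (Fin n) (Fin n) ℂ}
    (hA : A.IsHermitian) (hB : B.IsHermitian) (φ ψ : ℝ → ℝ) (K : Matrix (Fin n) (Fin n) ℂ) :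
    trRe (Kᴴ * cfc φ A * K * cfc ψ B) = spectralForm (fun a b => φ a * ψ b) hA hB K := by
  rw [trRe_conjTranspose_mul_cfc_mul_cfc hA hB, spectralForm]
  simp [Complex.normSq_apply]

lemma trRe_add {n : ℕ} (M N : Matrix (Fin n) (Fin n) ℂ) : trRe (M + N) = trRe M + trRe N := by
  simp [trRe]

lemma trRe_sub {n : ℕ} (M N : Matrix (Fin n) (Fin n) ℂ) : trRe (M - N) = trRe M - trRe N := by
  simp [trRe]

lemma trRe_smul {n : ℕ} (r : ℝ) (M : Matrix (Fin n) (Fin n) ℂ) :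
    trRe (r • M) = r * trRe M := by
  simp [trRe]

/-- The variational functional whose maximum over `X` is the spectral form of `a² / (c a + s b)`. -/
noncomputable def dualForm {n : ℕ} (c s : ℝ) (A B K X : Matrix (Fin n) (Fin n) ℂ) : ℝ :=
  2 * trRe (Xᴴ * A * K) - c * trRe (Xᴴ * A * X) - s * trRe (Xᴴ * X * B)

lemma dualForm_combination {n : ℕ} (c s t : ℝ) (A₁ A₂ B₁ B₂ K X : Matrix (Fin n) (Fin n) ℂ) :
    dualForm c s (t • A₁ + (1 - t) • A₂) (t • B₁ + (1 - t) • B₂) K X =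
      t * dualForm c s A₁ B₁ K X + (1 - t) * dualForm c s A₂ B₂ K X := by
  simp only [dualForm, mul_add, add_mul, mul_smul_comm, smul_mul_assoc, trRe_add, trRe_smul]
  ring

lemma dualForm_eq_sum {n : ℕ} (c s : ℝ) {A B : Matrix (Fin n) (Fin n) ℂ} (hA : A.IsHermitian)
    (hB : B.IsHermitian) (K X : Matrix (Fin n) (Fin n) ℂ) :
    dualForm c s A B K X = ∑ i, ∑ j,
      (2 * hA.eigenvalues i * (star (eigenCoord hA hB X i j) * eigenCoord hA hB K i j).re -
        (c * hA.eigenvalues i + s * hB.eigenvalues j) *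
          Complex.normSq (eigenCoord hA hB X i j)) := by
  have h₁ := trRe_conjTranspose_mul_cfc_mul_cfc hA hB (fun x => x) (fun _ => 1) X K
  have h₂ := trRe_conjTranspose_mul_cfc_mul_cfc_self hA hB (fun x => x) (fun _ => 1) X
  have h₃ := trRe_conjTranspose_mul_cfc_mul_cfc_self hA hB (fun _ => 1) (fun x => x) X
  rw [cfc_id' ℝ A hA.isSelfAdjoint, cfc_const_one ℝ B hB.isSelfAdjoint, mul_one] at h₁ h₂
  rw [cfc_id' ℝ B hB.isSelfAdjoint, cfc_const_one ℝ A hA.isSelfAdjoint, mul_one] at h₃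
  rw [dualForm, h₁, h₂, h₃, spectralForm, spectralForm]
  simp only [Finset.mul_sum, ← Finset.sum_sub_distrib]
  refine Finset.sum_congr rfl fun i _ => Finset.sum_congr rfl fun j _ => ?_
  ring

lemma two_mul_re_sub_le_div {a d : ℝ} (hd : 0 < d) (x k : ℂ) :
    2 * a * (star x * k).re - d * Complex.normSq x ≤ a ^ 2 / d * Complex.normSq k := by
  rw [div_mul_eq_mul_div, le_div_iff₀ hd]
  simp only [Complex.normSq_apply, Complex.star_def, Complex.mul_re, Complex.conj_re,
    Complex.conj_im]
  nlinarith [sq_nonneg (d * x.re - a * k.re), sq_nonneg (d * x.im - a * k.im)]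

lemma dualForm_le_spectralForm {n : ℕ} {c s : ℝ} (hc : 0 ≤ c) (hs : 0 < s)
    {A B : Matrix (Fin n) (Fin n) ℂ} (hA : A.PosDef) (hB : B.PosDef)
    (K X : Matrix (Fin n) (Fin n) ℂ) :
    dualForm c s A B K X ≤ spectralForm (fun a b => a ^ 2 / (c * a + s * b)) hA.1 hB.1 K := by
  rw [dualForm_eq_sum c s hA.1 hB.1, spectralForm]
  refine Finset.sum_le_sum fun i _ => Finset.sum_le_sum fun j _ => two_mul_re_sub_le_div ?_ _ _
  have := hA.eigenvalues_pos i
  have := hB.eigenvalues_pos j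
  positivity

lemma exists_dualForm_eq_spectralForm {n : ℕ} {c s : ℝ} (hc : 0 ≤ c) (hs : 0 < s)
    {A B : Matrix (Fin n) (Fin n) ℂ} (hA : A.PosDef) (hB : B.PosDef)
    (K : Matrix (Fin n) (Fin n) ℂ) :
    ∃ X, dualForm c s A B K X =
      spectralForm (fun a b => a ^ 2 / (c * a + s * b)) hA.1 hB.1 K := by
  obtain ⟨X, hX⟩ := eigenCoord_surjective hA.1 hB.1 (of fun i j =>
    ((hA.1.eigenvalues i / (c * hA.1.eigenvalues i + s * hB.1.eigenvalues j) : ℝ) : ℂ) *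
      eigenCoord hA.1 hB.1 K i j)
  refine ⟨X, ?_⟩
  rw [dualForm_eq_sum c s hA.1 hB.1, spectralForm]
  refine Finset.sum_congr rfl fun i _ => Finset.sum_congr rfl fun j _ => ?_
  have ha := hA.eigenvalues_pos i
  have hb := hB.eigenvalues_pos j
  have hd : 0 < c * hA.1.eigenvalues i + s * hB.1.eigenvalues j := by positivity
  rw [hX, of_apply]
  simp only [Complex.normSq_apply, Complex.star_def, Complex.mul_re, Complex.mul_im,
    Complex.conj_re, Complex.conj_im, Complex.ofReal_re, Complex.ofReal_im]
  field_simp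
  ring

lemma posDef_combination {n : ℕ} {A₁ A₂ : Matrix (Fin n) (Fin n) ℂ} (hA₁ : A₁.PosDef)
    (hA₂ : A₂.PosDef) {t : ℝ} (ht : t ∈ Set.Icc (0 : ℝ) 1) :
    (t • A₁ + (1 - t) • A₂).PosDef := by
  rcases ht.1.eq_or_lt with rfl | h0
  · simpa using hA₂
  · exact (hA₁.smul h0).add_posSemidef (hA₂.posSemidef.smul (sub_nonneg.2 ht.2))

/-- `SpectralConvex n f`: the spectral form of `f` is jointly convex in the pair of `n × n`
positive definite matrices. -/
def SpectralConvex (n : ℕ) (f : ℝ → ℝ → ℝ) : Prop :=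
  ∀ (A₁ A₂ B₁ B₂ K : Matrix (Fin n) (Fin n) ℂ) (hA₁ : A₁.PosDef) (hA₂ : A₂.PosDef)
    (hB₁ : B₁.PosDef) (hB₂ : B₂.PosDef) (t : ℝ) (ht : t ∈ Set.Icc (0 : ℝ) 1),
    spectralForm f (posDef_combination hA₁ hA₂ ht).1 (posDef_combination hB₁ hB₂ ht).1 K ≤
      t * spectralForm f hA₁.1 hB₁.1 K + (1 - t) * spectralForm f hA₂.1 hB₂.1 K

lemma spectralForm_congr {n : ℕ} {f g : ℝ → ℝ → ℝ} (h : ∀ a b, 0 < a → 0 < b → f a b = g a b)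
    {A B : Matrix (Fin n) (Fin n) ℂ} (hA : A.PosDef) (hB : B.PosDef)
    (K : Matrix (Fin n) (Fin n) ℂ) :
    spectralForm f hA.1 hB.1 K = spectralForm g hA.1 hB.1 K := by
  refine Finset.sum_congr rfl fun i _ => Finset.sum_congr rfl fun j _ => ?_
  rw [h _ _ (hA.eigenvalues_pos i) (hB.eigenvalues_pos j)]

lemma SpectralConvex.congr {n : ℕ} {f g : ℝ → ℝ → ℝ} (hf : SpectralConvex n f)
    (h : ∀ a b, 0 < a → 0 < b → f a b = g a b) : SpectralConvex n g := by
  intro A₁ A₂ B₁ B₂ K hA₁ hA₂ hB₁ hB₂ t ht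
  have := hf A₁ A₂ B₁ B₂ K hA₁ hA₂ hB₁ hB₂ t ht
  rwa [spectralForm_congr h hA₁ hB₁, spectralForm_congr h hA₂ hB₂,
    spectralForm_congr h (posDef_combination hA₁ hA₂ ht) (posDef_combination hB₁ hB₂ ht)] at this

lemma spectralConvex_sq_div (n : ℕ) {c s : ℝ} (hc : 0 ≤ c) (hs : 0 < s) :
    SpectralConvex n (fun a b => a ^ 2 / (c * a + s * b)) := by
  intro A₁ A₂ B₁ B₂ K hA₁ hA₂ hB₁ hB₂ t ht
  obtain ⟨X, hX⟩ := exists_dualForm_eq_spectralForm hc hs (posDef_combination hA₁ hA₂ ht)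
    (posDef_combination hB₁ hB₂ ht) K
  rw [← hX, dualForm_combination]
  exact add_le_add
    (mul_le_mul_of_nonneg_left (dualForm_le_spectralForm hc hs hA₁ hB₁ K X) ht.1)
    (mul_le_mul_of_nonneg_left (dualForm_le_spectralForm hc hs hA₂ hB₂ K X)
      (sub_nonneg.2 ht.2))

lemma spectralForm_fst {n : ℕ} {A B : Matrix (Fin n) (Fin n) ℂ} (hA : A.IsHermitian)
    (hB : B.IsHermitian) (K : Matrix (Fin n) (Fin n) ℂ) :
    spectralForm (fun a _ => a) hA hB K = trRe (Kᴴ * A * K) := by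
  have h := trRe_conjTranspose_mul_cfc_mul_cfc_self hA hB (fun x => x) (fun _ => 1) K
  rw [cfc_id' ℝ A hA.isSelfAdjoint, cfc_const_one ℝ B hB.isSelfAdjoint, mul_one] at h
  simpa using h.symm

lemma spectralForm_snd {n : ℕ} {A B : Matrix (Fin n) (Fin n) ℂ} (hA : A.IsHermitian)
    (hB : B.IsHermitian) (K : Matrix (Fin n) (Fin n) ℂ) :
    spectralForm (fun _ b => b) hA hB K = trRe (Kᴴ * K * B) := by
  have h := trRe_conjTranspose_mul_cfc_mul_cfc_self hA hB (fun _ => 1) (fun x => x) K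
  rw [cfc_id' ℝ B hB.isSelfAdjoint, cfc_const_one ℝ A hA.isSelfAdjoint, mul_one] at h
  simpa using h.symm

lemma spectralForm_const_mul {n : ℕ} (r : ℝ) (f : ℝ → ℝ → ℝ) {A B : Matrix (Fin n) (Fin n) ℂ}
    (hA : A.IsHermitian) (hB : B.IsHermitian) (K : Matrix (Fin n) (Fin n) ℂ) :
    spectralForm (fun a b => r * f a b) hA hB K = r * spectralForm f hA hB K := by
  simp only [spectralForm, Finset.mul_sum, mul_assoc]

lemma spectralForm_add {n : ℕ} (f g : ℝ → ℝ → ℝ) {A B : Matrix (Fin n) (Fin n) ℂ}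
    (hA : A.IsHermitian) (hB : B.IsHermitian) (K : Matrix (Fin n) (Fin n) ℂ) :
    spectralForm (fun a b => f a b + g a b) hA hB K =
      spectralForm f hA hB K + spectralForm g hA hB K := by
  simp only [spectralForm, add_mul, Finset.sum_add_distrib]

lemma spectralConvex_const_mul_fst (n : ℕ) (r : ℝ) : SpectralConvex n (fun a _ => r * a) := by
  intro A₁ A₂ B₁ B₂ K hA₁ hA₂ hB₁ hB₂ t ht
  simp only [spectralForm_const_mul r (fun a _ => a), spectralForm_fst]
  simp only [mul_add, add_mul, mul_smul_comm, smul_mul_assoc, trRe_add, trRe_smul]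
  apply le_of_eq
  ring

lemma spectralConvex_const_mul_snd (n : ℕ) (r : ℝ) : SpectralConvex n (fun _ b => r * b) := by
  intro A₁ A₂ B₁ B₂ K hA₁ hA₂ hB₁ hB₂ t ht
  simp only [spectralForm_const_mul r (fun _ b => b), spectralForm_snd]
  simp only [mul_add, mul_smul_comm, trRe_add, trRe_smul]
  apply le_of_eq
  ring

lemma SpectralConvex.const_mul {n : ℕ} {f : ℝ → ℝ → ℝ} (hf : SpectralConvex n f) {r : ℝ}
    (hr : 0 ≤ r) : SpectralConvex n (fun a b => r * f a b) := by
  intro A₁ A₂ B₁ B₂ K hA₁ hA₂ hB₁ hB₂ t ht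
  simp only [spectralForm_const_mul]
  have := mul_le_mul_of_nonneg_left (hf A₁ A₂ B₁ B₂ K hA₁ hA₂ hB₁ hB₂ t ht) hr
  linarith

lemma SpectralConvex.add {n : ℕ} {f g : ℝ → ℝ → ℝ} (hf : SpectralConvex n f)
    (hg : SpectralConvex n g) : SpectralConvex n (fun a b => f a b + g a b) := by
  intro A₁ A₂ B₁ B₂ K hA₁ hA₂ hB₁ hB₂ t ht
  simp only [spectralForm_add]
  have h₁ := hf A₁ A₂ B₁ B₂ K hA₁ hA₂ hB₁ hB₂ t ht
  have h₂ := hg A₁ A₂ B₁ B₂ K hA₁ hA₂ hB₁ hB₂ t ht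
  linarith

open MeasureTheory in
lemma spectralForm_integral {n : ℕ} {μ : Measure ℝ} {g : ℝ → ℝ → ℝ → ℝ}
    (hg : ∀ a b, 0 < a → 0 < b → Integrable (fun u => g u a b) μ)
    {A B : Matrix (Fin n) (Fin n) ℂ} (hA : A.PosDef) (hB : B.PosDef)
    (K : Matrix (Fin n) (Fin n) ℂ) :
    Integrable (fun u => spectralForm (g u) hA.1 hB.1 K) μ ∧
      ∫ u, spectralForm (g u) hA.1 hB.1 K ∂μ =
        spectralForm (fun a b => ∫ u, g u a b ∂μ) hA.1 hB.1 K := by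
  have h : ∀ i j, Integrable (fun u => g u (hA.1.eigenvalues i) (hB.1.eigenvalues j) *
      Complex.normSq (eigenCoord hA.1 hB.1 K i j)) μ := fun i j =>
    (hg _ _ (hA.eigenvalues_pos i) (hB.eigenvalues_pos j)).mul_const _
  simp only [spectralForm]
  refine ⟨integrable_finsetSum _ fun i _ => integrable_finsetSum _ fun j _ => h i j, ?_⟩
  rw [integral_finsetSum _ fun i _ => integrable_finsetSum _ fun j _ => h i j]
  refine Finset.sum_congr rfl fun i _ => ?_
  rw [integral_finsetSum _ fun j _ => h i j]
  exact Finset.sum_congr rfl fun j _ => integral_mul_const _ _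

open MeasureTheory in
lemma SpectralConvex.integral {n : ℕ} {μ : Measure ℝ} {g : ℝ → ℝ → ℝ → ℝ}
    (hg : ∀ a b, 0 < a → 0 < b → Integrable (fun u => g u a b) μ)
    (hconv : ∀ᵐ u ∂μ, SpectralConvex n (g u)) :
    SpectralConvex n (fun a b => ∫ u, g u a b ∂μ) := by
  intro A₁ A₂ B₁ B₂ K hA₁ hA₂ hB₁ hB₂ t ht
  obtain ⟨i₁, e₁⟩ := spectralForm_integral hg hA₁ hB₁ K
  obtain ⟨i₂, e₂⟩ := spectralForm_integral hg hA₂ hB₂ K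
  obtain ⟨i, e⟩ := spectralForm_integral hg (posDef_combination hA₁ hA₂ ht)
    (posDef_combination hB₁ hB₂ ht) K
  rw [← e, ← e₁, ← e₂, ← integral_const_mul, ← integral_const_mul,
    ← integral_add (i₁.const_mul _) (i₂.const_mul _)]
  refine integral_mono_ae i ((i₁.const_mul _).add (i₂.const_mul _)) ?_
  filter_upwards [hconv] with u hu
  exact hu A₁ A₂ B₁ B₂ K hA₁ hA₂ hB₁ hB₂ t ht

/-- Lieb's concavity theorem, in terms of spectral forms. -/
lemma spectralConvex_neg_rpow_mul_rpow (n : ℕ) {p : ℝ} (hp : p ∈ Set.Ico (0 : ℝ) 1) :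
    SpectralConvex n (fun a b => -(a ^ p * b ^ (1 - p))) := by
  rcases hp.1.eq_or_lt with rfl | h0
  · exact (spectralConvex_const_mul_snd n (-1)).congr fun a b _ _ => by simp
  obtain ⟨μ, hμ⟩ := Real.exists_measure_rpow_eq_integral_rpowIntegrand₀₁ (p := p) ⟨h0, hp.2⟩
  have key : SpectralConvex n (fun a b =>
      ∫ u in Set.Ioi 0, -b * Real.rpowIntegrand₀₁ p u (a / b) ∂μ) := by
    refine SpectralConvex.integral
      (fun a b ha hb => (hμ (a / b) (div_pos ha hb).le).1.const_mul _) ?_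
    filter_upwards [MeasureTheory.ae_restrict_mem measurableSet_Ioi] with u hu
    have hu : 0 < u := hu
    refine (((spectralConvex_sq_div n zero_le_one hu).add
      (spectralConvex_const_mul_fst n (-1))).const_mul
        (r := u ^ p / u ^ 2) (by positivity)).congr fun a b ha hb => ?_
    rw [Real.rpowIntegrand₀₁]
    field_simp
    ring
  refine key.congr fun a b ha hb => ?_
  rw [MeasureTheory.integral_const_mul, ← (hμ (a / b) (div_pos ha hb).le).2,
    Real.div_rpow ha.le hb.le, Real.rpow_sub hb, Real.rpow_one]
  ring

/-- Ando's convexity theorem, in terms of spectral forms. -/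
lemma spectralConvex_rpow_mul_rpow (n : ℕ) {p : ℝ} (hp : p ∈ Set.Ioc (1 : ℝ) 2) :
    SpectralConvex n (fun a b => a ^ p * b ^ (1 - p)) := by
  rcases hp.2.eq_or_lt with rfl | h2
  · refine (spectralConvex_sq_div n le_rfl one_pos).congr fun a b _ hb => ?_
    rw [show (1 - 2 : ℝ) = -1 by norm_num, Real.rpow_neg_one, Real.rpow_two]
    ring
  obtain ⟨μ, hμ⟩ := Real.exists_measure_rpow_eq_integral_rpowIntegrand₀₁ (p := p - 1)
    ⟨by linarith [hp.1], by linarith⟩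
  have key : SpectralConvex n (fun a b =>
      ∫ u in Set.Ioi 0, a * Real.rpowIntegrand₀₁ (p - 1) u (a / b) ∂μ) := by
    refine SpectralConvex.integral
      (fun a b ha hb => (hμ (a / b) (div_pos ha hb).le).1.const_mul _) ?_
    filter_upwards [MeasureTheory.ae_restrict_mem measurableSet_Ioi] with u hu
    have hu : 0 < u := hu
    refine ((spectralConvex_sq_div n zero_le_one hu).const_mul
        (r := u ^ (p - 1) / u) (by positivity)).congr fun a b ha hb => ?_
    rw [Real.rpowIntegrand₀₁]
    field_simp
    ring
  refine key.congr fun a b ha hb => ?_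
  rw [MeasureTheory.integral_const_mul, ← (hμ (a / b) (div_pos ha hb).le).2,
    Real.div_rpow ha.le hb.le, ← neg_sub p 1, Real.rpow_neg hb.le, Real.rpow_sub_one ha.ne']
  field_simp

lemma posSemidef_one_sub_mul_conjTranspose {n : ℕ} {H : Matrix (Fin n) (Fin n) ℂ}
    (hH : (1 - Hᴴ * H).PosSemidef) : (1 - H * Hᴴ).PosSemidef := by
  let : Invertible (1 : Matrix (Fin n) (Fin n) ℂ) := invertibleOne
  have h₁ := PosDef.fromBlocks₁₁ H (1 : Matrix (Fin n) (Fin n) ℂ) PosDef.one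
  have h₂ := PosDef.fromBlocks₂₂ (1 : Matrix (Fin n) (Fin n) ℂ) H PosDef.one
  simp only [inv_one, mul_one] at h₁ h₂
  exact h₂.1 (h₁.2 hH)

open MatrixOrder in
lemma exists_mul_conjTranspose_add_eq_one {n : ℕ} {H : Matrix (Fin n) (Fin n) ℂ}
    (hH : (1 - Hᴴ * H).PosSemidef) :
    ∃ K : Matrix (Fin n) (Fin n) ℂ, K * Kᴴ + H * Hᴴ = 1 := by
  obtain ⟨C, hC⟩ := CStarAlgebra.nonneg_iff_eq_star_mul_self.mp
    (posSemidef_one_sub_mul_conjTranspose hH).nonneg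
  refine ⟨Cᴴ, ?_⟩
  rw [conjTranspose_conjTranspose, ← star_eq_conjTranspose, ← hC, sub_add_cancel]

lemma continuousOn_spectrum {n : ℕ} (f : ℝ → ℝ) (A : Matrix (Fin n) (Fin n) ℂ) :
    ContinuousOn f (spectrum ℝ A) :=
  A.finite_real_spectrum.continuousOn f

lemma mlogq_eq {n : ℕ} (q : ℝ) {B : Matrix (Fin n) (Fin n) ℂ} (hB : B.IsHermitian) :
    mlogq q B = (q - 1)⁻¹ • (mpow B (q - 1) - 1) := by
  have h : logq q = fun x => (q - 1)⁻¹ * (x ^ (q - 1) - 1) := by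
    ext x
    rw [logq, div_eq_inv_mul]
  rw [mlogq, h, cfc_const_mul _ _ _ (continuousOn_spectrum _ _),
    cfc_sub (fun x => x ^ (q - 1)) (fun _ => 1) B (continuousOn_spectrum _ _)
      (continuousOn_spectrum _ _),
    cfc_const_one ℝ B hB.isSelfAdjoint, mpow]

lemma mpow_mul_mpow {n : ℕ} (q : ℝ) {A : Matrix (Fin n) (Fin n) ℂ} (hA : A.PosDef) :
    mpow A (2 - q) * mpow A (q - 1) = A := by
  rw [mpow, mpow, ← cfc_mul _ _ _ (continuousOn_spectrum _ _) (continuousOn_spectrum _ _)]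
  conv_rhs => rw [← cfc_id' ℝ A hA.1.isSelfAdjoint]
  refine cfc_congr fun x hx => ?_
  have h : 0 < x := by
    rw [hA.1.spectrum_real_eq_range_eigenvalues] at hx
    obtain ⟨i, rfl⟩ := hx
    exact hA.eigenvalues_pos i
  rw [← Real.rpow_add h, show 2 - q + (q - 1) = 1 by ring, Real.rpow_one]

lemma mpow_one_left (n : ℕ) (p : ℝ) : mpow (1 : Matrix (Fin n) (Fin n) ℂ) p = 1 := by
  rw [mpow, cfc_apply_one, Real.one_rpow, map_one]

lemma STq_eq {n : ℕ} {H K : Matrix (Fin n) (Fin n) ℂ} (hK : K * Kᴴ + H * Hᴴ = 1) {q : ℝ}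
    {A B : Matrix (Fin n) (Fin n) ℂ} (hA : A.PosDef) (hB : B.PosDef) :
    STq H q A B = ((q - 1)⁻¹ - 1) * trRe A + trRe B
      - (q - 1)⁻¹ * trRe (Hᴴ * mpow A (2 - q) * H * mpow B (q - 1))
      - (q - 1)⁻¹ * trRe (Kᴴ * mpow A (2 - q) * K * mpow 1 (q - 1)) := by
  have hcyc : ∀ X : Matrix (Fin n) (Fin n) ℂ,
      trRe (Xᴴ * mpow A (2 - q) * X) = trRe (mpow A (2 - q) * (X * Xᴴ)) := fun X => by
    rw [trRe, trRe, mul_assoc, trace_mul_comm, mul_assoc]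
  have hsum : trRe (Kᴴ * mpow A (2 - q) * K) + trRe (Hᴴ * mpow A (2 - q) * H) =
      trRe (mpow A (2 - q)) := by
    rw [hcyc, hcyc, ← trRe_add, ← mul_add, hK, mul_one]
  rw [STq, mlogq_eq q hA.1, mlogq_eq q hB.1, mpow_one_left, mul_one]
  simp only [mul_smul_comm, mul_sub, mul_one, mpow_mul_mpow q hA, trRe_add, trRe_sub, trRe_smul]
  rw [← hsum]
  ring

lemma SpectralConvex.trRe_mpow {n : ℕ} {r q : ℝ}
    (h : SpectralConvex n (fun a b => r * (a ^ (2 - q) * b ^ (q - 1))))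
    {A₁ A₂ B₁ B₂ : Matrix (Fin n) (Fin n) ℂ} (K : Matrix (Fin n) (Fin n) ℂ)
    (hA₁ : A₁.PosDef) (hA₂ : A₂.PosDef) (hB₁ : B₁.PosDef) (hB₂ : B₂.PosDef)
    {t : ℝ} (ht : t ∈ Set.Icc (0 : ℝ) 1) :
    r * trRe (Kᴴ * mpow (t • A₁ + (1 - t) • A₂) (2 - q) * K *
        mpow (t • B₁ + (1 - t) • B₂) (q - 1)) ≤
      t * (r * trRe (Kᴴ * mpow A₁ (2 - q) * K * mpow B₁ (q - 1))) +
        (1 - t) * (r * trRe (Kᴴ * mpow A₂ (2 - q) * K * mpow B₂ (q - 1))) := by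
  have := h A₁ A₂ B₁ B₂ K hA₁ hA₂ hB₁ hB₂ t ht
  simp only [spectralForm_const_mul, ← trRe_conjTranspose_mul_cfc_mul_cfc_self] at this
  exact this

lemma spectralConvex_tsallis (n : ℕ) {q : ℝ} (hq : q ∈ Set.Ico (0 : ℝ) 1 ∪ Set.Ioc 1 2) :
    SpectralConvex n (fun a b => -(q - 1)⁻¹ * (a ^ (2 - q) * b ^ (q - 1))) := by
  have e : 1 - (2 - q) = q - 1 := by ring
  rcases hq with hq | hq
  · have h := spectralConvex_rpow_mul_rpow n (p := 2 - q)
      ⟨by linarith [hq.2], by linarith [hq.1]⟩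
    rw [e] at h
    exact h.const_mul (neg_nonneg.2 (inv_nonpos.2 (by linarith [hq.2])))
  · have h := spectralConvex_neg_rpow_mul_rpow n (p := 2 - q)
      ⟨by linarith [hq.2], by linarith [hq.1]⟩
    rw [e] at h
    exact (h.const_mul (inv_nonneg.2 (by linarith [hq.1] : 0 ≤ q - 1))).congr
      fun a b _ _ => by ring

/-- Joint convexity of the reduced Tsallis relative entropy for q ∈ [0,1) ∪ (1,2]. -/
theorem stmt4 {n : ℕ} (H : Matrix (Fin n) (Fin n) ℂ) (hH : (1 - Hᴴ * H).PosSemidef)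
    (q : ℝ) (hq : q ∈ Set.Ico (0 : ℝ) 1 ∪ Set.Ioc 1 2)
    (A₁ A₂ B₁ B₂ : Matrix (Fin n) (Fin n) ℂ)
    (hA₁ : A₁.PosDef) (hA₂ : A₂.PosDef) (hB₁ : B₁.PosDef) (hB₂ : B₂.PosDef)
    (t : ℝ) (ht : t ∈ Set.Icc (0 : ℝ) 1) :
    STq H q (t • A₁ + (1 - t) • A₂) (t • B₁ + (1 - t) • B₂)
      ≤ t * STq H q A₁ B₁ + (1 - t) * STq H q A₂ B₂ := by
  obtain ⟨K, hK⟩ := exists_mul_conjTranspose_add_eq_one hH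
  have hconv := spectralConvex_tsallis n hq
  have h₁ := hconv.trRe_mpow H hA₁ hA₂ hB₁ hB₂ ht
  have h₂ := hconv.trRe_mpow K hA₁ hA₂ PosDef.one PosDef.one ht
  rw [← add_smul, add_sub_cancel, one_smul] at h₂
  rw [STq_eq hK (posDef_combination hA₁ hA₂ ht) (posDef_combination hB₁ hB₂ ht),
    STq_eq hK hA₁ hB₁, STq_eq hK hA₂ hB₂]
  simp only [trRe_add, trRe_smul]
  linarith
end
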